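/- Let Kₙ(x,y) = e^{−(x²+y²)/2}/(2ⁿ·(n−1)!·√π) · ( Hₙ(x)·H_{n−1}(y) − H_{n−1}(x)·Hₙ(y) )/(x − y) for x ≠ y, extended smoothly across the diagonal (equivalently Kₙ(x,y) = Σ_{j=0}^{n−1} ηⱼ(x)ηⱼ(y) for the L²-normalized Hermite functions ηⱼ). For every ε > 0 and every integer k ≥ 0 there is a constant C (depending only on k and ε) such that for all n ≥ 1 and all (x,y) in the square R = [−(√2−ε)√n, (√2−ε)√n]²: (i) every mixed partial derivative of Kₙ of total order k satisfies |∂^k Kₙ(x,y)| ≤ C·n^{(1+k)/2}; and (ii) if additionally |x − y| ≥ n^{−1/2}, then |∂^k Kₙ(x,y)| ≤ C·n^{k/2}/|x − y|. -/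

import Mathlib

open Real

/-!
The Hermite functions satisfy the ladder relations
`ψₙ' = √(2n) ψₙ₋₁ - x ψₙ = x ψₙ - √(2n + 2) ψₙ₊₁`. They imply that the energy
`E(x) = Kₙ(x, x) + Kₙ₊₁(x, x)` has derivative `-2 x ψₙ(x)²`, so it is maximal at `0`, where it is
`O(√n)`. On the diagonal the Christoffel–Darboux formula makes `E` a quadratic form in
`(ψₙ, ψₙ₋₁)`, which for `|x| ≤ (√2 - ε) √n` dominates `√2 ε n (ψₙ² + ψₙ₋₁²)`; hence
`ψₙ, ψₙ₋₁ = O(n^{-1/4})` there. By the ladder relations each derivative costs a factor `√n`, both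
for `ψₙ, ψₙ₋₁` and for `∑_{j<n} ψⱼ² = Kₙ(x, x) = O(√n)`. The first bound is then the
Cauchy–Schwarz inequality, and the second follows by differentiating the Christoffel–Darboux
formula for `(x - y) Kₙ(x, y)`. All estimates are carried out for squares, which keeps the
exponents of `n` integral.
-/

section HermiteKernel

open Polynomial
open scoped Nat

section Preliminaries

theorem iteratedDeriv_id_mul {𝕜 : Type*} [NontriviallyNormedField 𝕜] {f : 𝕜 → 𝕜} {k : ℕ} {x : 𝕜}
    (hf : ContDiffAt 𝕜 k f x) :
    iteratedDeriv k (fun u ↦ u * f u) x =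
      x * iteratedDeriv k f x + k * iteratedDeriv (k - 1) f x := by
  have leibniz := iteratedDeriv_fun_mul (contDiffAt_id (n := k)) hf
  rcases k with _ | k
  · simp
  · simp only [Finset.sum_range_succ', iteratedDeriv_id, id] at leibniz
    simpa [add_comm] using leibniz

theorem apply_le_apply_zero_of_hasDerivAt {f g : ℝ → ℝ} (hf : ∀ x, HasDerivAt f (-(x * g x)) x)
    (hg : ∀ x, 0 ≤ g x) (x : ℝ) : f x ≤ f 0 := by
  -- Moving along the ray `t ↦ t * x` treats both signs of `x` at once.
  have radial (t : ℝ) : HasDerivAt (fun t ↦ f (t * x)) (-(t * x * g (t * x)) * x) t := by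
    simpa [Function.comp_def] using (hf (t * x)).comp t ((hasDerivAt_id t).mul_const x)
  have anti : AntitoneOn (fun t ↦ f (t * x)) (Set.Ici 0) := by
    refine antitoneOn_of_hasDerivWithinAt_nonpos (convex_Ici 0)
      (fun t _ ↦ (radial t).continuousAt.continuousWithinAt)
      (fun t _ ↦ (radial t).hasDerivWithinAt) fun t ht ↦ ?_
    rw [interior_Ici] at ht
    have := mul_nonneg (mul_nonneg (Set.mem_Ioi.1 ht).le (sq_nonneg x)) (hg (t * x))
    linarith
  simpa using anti Set.self_mem_Ici (Set.mem_Ici.2 zero_le_one) zero_le_one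

theorem sum_range_mul_pred_add_mul_succ {R : Type*} [CommRing R] (a : ℕ → R) (n : ℕ) :
    ∑ j ∈ Finset.range n, (j * a (j - 1) + (j + 1) * a (j + 1)) =
      ∑ j ∈ Finset.range n, (2 * j + 1) * a j + n * (a n - a (n - 1)) := by
  induction n with
  | zero => simp
  | succ n ih =>
    simp only [Finset.sum_range_succ, ih, Nat.add_sub_cancel]
    push_cast
    ring

theorem abs_le_sqrt_mul_rpow_of_sq_le {a b C : ℝ} {m : ℕ} (hb : 0 ≤ b) (h : a ^ 2 ≤ C * b ^ m) :
    |a| ≤ √C * b ^ ((m : ℝ) / 2) := by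
  have : √(b ^ m) = b ^ ((m : ℝ) / 2) := by
    rw [Real.sqrt_eq_rpow, ← Real.rpow_natCast, ← Real.rpow_mul hb, mul_one_div]
  rw [← this, ← Real.sqrt_mul' C (pow_nonneg hb m)]
  exact Real.abs_le_sqrt h

theorem add_add_sq_le {R : Type*} [CommRing R] [LinearOrder R] [IsStrictOrderedRing R]
    (a b c : R) : (a + b + c) ^ 2 ≤ 3 * (a ^ 2 + b ^ 2 + c ^ 2) := by
  linarith [sq_nonneg (a - b), sq_nonneg (b - c), sq_nonneg (a - c)]

theorem sq_mul_sub_mul_le {R : Type*} [CommRing R] [LinearOrder R] [IsStrictOrderedRing R]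
    (a b c d : R) : (a * d - b * c) ^ 2 ≤ (a ^ 2 + b ^ 2) * (c ^ 2 + d ^ 2) := by
  linarith [sq_nonneg (a * c + b * d)]

end Preliminaries

theorem derivative_hermite_succ (n : ℕ) :
    derivative (hermite (n + 1)) = (n + 1) * hermite n := by
  induction n with
  | zero => simp
  | succ n ih =>
    rw [hermite_succ (n + 1), derivative_sub, derivative_mul, ih, derivative_mul, hermite_succ n]
    simp only [derivative_X, derivative_add, derivative_natCast, derivative_one, Nat.cast_succ]
    ring

/-- The `L²`-normalized Hermite functions. In terms of the probabilists' polynomials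
`Heₙ(√2 x) = 2^{-n/2} Hₙ(x)`, the power of two in the usual normalization
`(2ⁿ n! √π)^{-1/2} Hₙ(x) e^{-x²/2}` cancels. -/
noncomputable def hermiteFunction (n : ℕ) (x : ℝ) : ℝ :=
  aeval (√2 * x) (hermite n) * rexp (-x ^ 2 / 2) / √(n ! * √π)

local notation "ψ" => hermiteFunction

theorem sqrt_factorial_succ_mul (n : ℕ) :
    √((n + 1)! * √π) = √(n + 1) * √(n ! * √π) := by
  rw [Nat.factorial_succ, Nat.cast_mul, mul_assoc, Real.sqrt_mul (Nat.cast_nonneg _), Nat.cast_succ]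

theorem physicists_hermite_mul_exp_div_eq_hermiteFunction (n : ℕ) (x : ℝ) :
    (2 : ℝ) ^ ((n : ℝ) / 2) * aeval (x * √2) (hermite n) * rexp (-x ^ 2 / 2) /
      √(2 ^ n * n ! * √π) = ψ n x := by
  have h : (2 : ℝ) ^ ((n : ℝ) / 2) = √(2 ^ n) := by
    rw [Real.sqrt_eq_rpow, ← Real.rpow_natCast, ← Real.rpow_mul zero_le_two, mul_one_div]
  rw [h, hermiteFunction, mul_comm x, mul_assoc (2 ^ n), Real.sqrt_mul (by positivity)]
  field_simp

theorem contDiff_hermiteFunction {m : WithTop ℕ∞} (n : ℕ) : ContDiff ℝ m (ψ n) := by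
  unfold hermiteFunction
  have := (hermite n).contDiff_aeval (𝕜 := ℝ) m
  fun_prop

theorem hasDerivAt_hermiteFunction_aeval (n : ℕ) (x : ℝ) :
    HasDerivAt (ψ n) (√2 * aeval (√2 * x) (derivative (hermite n)) * rexp (-x ^ 2 / 2) /
      √(n ! * √π) - x * ψ n x) x := by
  have hpoly : HasDerivAt (fun x ↦ aeval (√2 * x) (hermite n))
      (aeval (√2 * x) (derivative (hermite n)) * √2) x := by
    simpa [Function.comp_def] using
      ((hermite n).hasDerivAt_aeval (√2 * x)).comp x ((hasDerivAt_id x).const_mul √2)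
  have hexp : HasDerivAt (fun x : ℝ ↦ rexp (-x ^ 2 / 2)) (rexp (-x ^ 2 / 2) * -x) x := by
    simpa [neg_div] using (((hasDerivAt_pow 2 x).neg).div_const 2).exp
  refine ((hpoly.mul hexp).div_const √(n ! * √π)).congr_deriv ?_
  rw [hermiteFunction]
  ring

theorem hasDerivAt_hermiteFunction_raise (n : ℕ) (x : ℝ) :
    HasDerivAt (ψ n) (x * ψ n x - √(2 * (n + 1)) * ψ (n + 1) x) x := by
  refine (hasDerivAt_hermiteFunction_aeval n x).congr_deriv ?_
  have h2 : √2 * √2 = 2 := Real.mul_self_sqrt zero_le_two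
  have hn : √((n : ℝ) + 1) ≠ 0 := by positivity
  simp only [hermiteFunction, hermite_succ, map_sub, map_mul, aeval_X, sqrt_factorial_succ_mul,
    Real.sqrt_mul zero_le_two]
  field_simp
  linear_combination x * aeval (√2 * x) (hermite n) * h2

-- At `n = 0` the coefficient vanishes, so the junk index `n - 1 = 0` is harmless.
theorem hasDerivAt_hermiteFunction_lower (n : ℕ) (x : ℝ) :
    HasDerivAt (ψ n) (√(2 * n) * ψ (n - 1) x - x * ψ n x) x := by
  refine (hasDerivAt_hermiteFunction_aeval n x).congr_deriv ?_
  rcases n with _ | n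
  · simp
  · have hn : √((n : ℝ) + 1) * √(n + 1) = n + 1 := Real.mul_self_sqrt (by positivity)
    have hn' : √((n : ℝ) + 1) ≠ 0 := by positivity
    simp only [hermiteFunction, derivative_hermite_succ, map_mul, map_add, map_natCast, map_one,
      sqrt_factorial_succ_mul, Real.sqrt_mul zero_le_two, Nat.add_sub_cancel, Nat.cast_succ]
    field_simp
    linear_combination -√2 * aeval (√2 * x) (hermite n) * hn

section Ladder

variable (k n : ℕ) (x : ℝ)

theorem iteratedDeriv_succ_hermiteFunction_raise :
    iteratedDeriv (k + 1) (ψ n) x = x * iteratedDeriv k (ψ n) x +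
      k * iteratedDeriv (k - 1) (ψ n) x - √(2 * (n + 1)) * iteratedDeriv k (ψ (n + 1)) x := by
  have hψ (m : ℕ) : ContDiffAt ℝ k (ψ m) x := (contDiff_hermiteFunction m).contDiffAt
  rw [iteratedDeriv_succ', funext fun u ↦ (hasDerivAt_hermiteFunction_raise n u).deriv,
    iteratedDeriv_fun_sub (contDiffAt_fun_id.mul (hψ n)) (contDiffAt_const.mul (hψ _)),
    iteratedDeriv_id_mul (hψ n), iteratedDeriv_const_mul_field]

theorem iteratedDeriv_succ_hermiteFunction_lower :
    iteratedDeriv (k + 1) (ψ n) x = √(2 * n) * iteratedDeriv k (ψ (n - 1)) x -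
      (x * iteratedDeriv k (ψ n) x + k * iteratedDeriv (k - 1) (ψ n) x) := by
  have hψ (m : ℕ) : ContDiffAt ℝ k (ψ m) x := (contDiff_hermiteFunction m).contDiffAt
  rw [iteratedDeriv_succ', funext fun u ↦ (hasDerivAt_hermiteFunction_lower n u).deriv,
    iteratedDeriv_fun_sub (contDiffAt_const.mul (hψ _)) (contDiffAt_fun_id.mul (hψ n)),
    iteratedDeriv_id_mul (hψ n), iteratedDeriv_const_mul_field]

theorem two_mul_iteratedDeriv_succ_hermiteFunction :
    2 * iteratedDeriv (k + 1) (ψ n) x = √(2 * n) * iteratedDeriv k (ψ (n - 1)) x -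
      √(2 * (n + 1)) * iteratedDeriv k (ψ (n + 1)) x := by
  linear_combination iteratedDeriv_succ_hermiteFunction_raise k n x +
    iteratedDeriv_succ_hermiteFunction_lower k n x

theorem iteratedDeriv_hermiteFunction_three_term :
    2 * (x * iteratedDeriv k (ψ n) x + k * iteratedDeriv (k - 1) (ψ n) x) =
      √(2 * n) * iteratedDeriv k (ψ (n - 1)) x +
        √(2 * (n + 1)) * iteratedDeriv k (ψ (n + 1)) x := by
  linear_combination iteratedDeriv_succ_hermiteFunction_lower k n x -
    iteratedDeriv_succ_hermiteFunction_raise k n x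

end Ladder

theorem two_mul_mul_hermiteFunction (n : ℕ) (x : ℝ) :
    2 * (x * ψ n x) = √(2 * n) * ψ (n - 1) x + √(2 * (n + 1)) * ψ (n + 1) x := by
  simpa using iteratedDeriv_hermiteFunction_three_term 0 n x

theorem hermiteFunction_one_zero : ψ 1 0 = 0 := by
  simp [hermiteFunction]

theorem mul_sq_hermiteFunction_add_two_zero (n : ℕ) :
    (n + 2) * ψ (n + 2) 0 ^ 2 = (n + 1) * ψ n 0 ^ 2 := by
  have recurrence := two_mul_mul_hermiteFunction (n + 1) 0
  have hsq₁ : √(2 * (n + 1) : ℝ) ^ 2 = 2 * (n + 1) := Real.sq_sqrt (by positivity)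
  have hsq₂ : √(2 * (n + 1 + 1) : ℝ) ^ 2 = 2 * (n + 1 + 1) := Real.sq_sqrt (by positivity)
  simp only [Nat.add_sub_cancel, Nat.cast_succ, zero_mul, mul_zero] at recurrence
  linear_combination (√(2 * (n + 1)) * ψ n 0 - √(2 * (n + 1 + 1)) * ψ (n + 2) 0) / 2 * recurrence +
    ψ n 0 ^ 2 / 2 * hsq₁ - ψ (n + 2) 0 ^ 2 / 2 * hsq₂

theorem sqrt_mul_sq_hermiteFunction_zero_le (n : ℕ) : √(n + 1) * ψ n 0 ^ 2 ≤ 1 := by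
  induction n using Nat.twoStepInduction with
  | zero =>
    have hπ : (1 : ℝ) ≤ √π := Real.one_le_sqrt.2 (by linarith [Real.pi_gt_three])
    simpa [hermiteFunction] using inv_le_one_of_one_le₀ hπ
  | one => simp [hermiteFunction_one_zero]
  | more n ih _ =>
    have hsqrt : √((n + 2 : ℕ) + 1 : ℝ) * √(n + 1) ≤ n + 2 := by
      rw [← Real.sqrt_mul (by positivity)]
      refine Real.sqrt_le_iff.2 ⟨by positivity, ?_⟩
      push_cast
      linarith
    have hn : √(n + 1 : ℝ) * √(n + 1) = n + 1 := Real.mul_self_sqrt (by positivity)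
    have shifted : (n + 2) * (√((n + 2 : ℕ) + 1) * ψ (n + 2) 0 ^ 2) ≤ (n + 2) * 1 := calc
      _ = √((n + 2 : ℕ) + 1) * √(n + 1) * (√(n + 1) * ψ n 0 ^ 2) := by
        linear_combination √((n + 2 : ℕ) + 1) * mul_sq_hermiteFunction_add_two_zero n -
          √((n + 2 : ℕ) + 1) * ψ n 0 ^ 2 * hn
      _ ≤ (n + 2) * 1 := by gcongr
    exact le_of_mul_le_mul_left shifted (by positivity)

theorem succ_mul_sq_hermiteFunction_zero_le (n : ℕ) : (n + 1) * ψ n 0 ^ 2 ≤ √(n + 1) := calc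
  (n + 1) * ψ n 0 ^ 2 = √(n + 1) * (√(n + 1) * ψ n 0 ^ 2) := by
    rw [← mul_assoc, Real.mul_self_sqrt (by positivity)]
  _ ≤ √(n + 1) := mul_le_of_le_one_right (by positivity) (sqrt_mul_sq_hermiteFunction_zero_le n)

section Energy

theorem sum_range_sq_hermiteFunction (n : ℕ) (x : ℝ) :
    ∑ j ∈ Finset.range n, ψ j x ^ 2 =
      n * (ψ n x ^ 2 + ψ (n - 1) x ^ 2) - √(2 * n) * x * ψ n x * ψ (n - 1) x := by
  induction n with
  | zero => simp
  | succ n ih =>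
    have hsq₁ : √(2 * n : ℝ) ^ 2 = 2 * n := Real.sq_sqrt (by positivity)
    have hsq₂ : √(2 * (n + 1) : ℝ) ^ 2 = 2 * (n + 1) := Real.sq_sqrt (by positivity)
    rw [Finset.sum_range_succ, ih, Nat.add_sub_cancel, Nat.cast_succ]
    linear_combination (√(2 * (n + 1)) * ψ (n + 1) x - √(2 * n) * ψ (n - 1) x) / 2 *
      two_mul_mul_hermiteFunction n x - ψ (n - 1) x ^ 2 / 2 * hsq₁ + ψ (n + 1) x ^ 2 / 2 * hsq₂

theorem hasDerivAt_sum_range_sq_hermiteFunction (n : ℕ) (x : ℝ) :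
    HasDerivAt (fun x ↦ ∑ j ∈ Finset.range n, ψ j x ^ 2) (-(√(2 * n) * ψ n x * ψ (n - 1) x)) x := by
  induction n with
  | zero => simpa using hasDerivAt_const x (0 : ℝ)
  | succ n ih =>
    simp only [Finset.sum_range_succ]
    refine (ih.add ((hasDerivAt_hermiteFunction_lower n x).pow 2)).congr_deriv ?_
    rw [Nat.add_sub_cancel, Nat.cast_succ]
    push_cast
    linear_combination -ψ n x * two_mul_mul_hermiteFunction n x

/-- The energy `Kₙ(x, x) + Kₙ₊₁(x, x)`, where `Kₙ` is the GUE projection kernel. Averaging over two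
consecutive sizes is what makes its derivative `-2 x ψₙ(x)²` have the sign of `-x`. -/
noncomputable def hermiteEnergy (n : ℕ) (x : ℝ) : ℝ :=
  ∑ j ∈ Finset.range n, ψ j x ^ 2 + ∑ j ∈ Finset.range (n + 1), ψ j x ^ 2

variable (n : ℕ) (x : ℝ)

theorem hermiteEnergy_eq : hermiteEnergy n x =
    (2 * n + 1) * ψ n x ^ 2 + 2 * n * ψ (n - 1) x ^ 2 - 2 * √(2 * n) * x * ψ n x * ψ (n - 1) x := by
  rw [hermiteEnergy, Finset.sum_range_succ, sum_range_sq_hermiteFunction]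
  ring

theorem hasDerivAt_hermiteEnergy :
    HasDerivAt (hermiteEnergy n) (-(x * (2 * ψ n x ^ 2))) x := by
  refine ((hasDerivAt_sum_range_sq_hermiteFunction n x).add
    (hasDerivAt_sum_range_sq_hermiteFunction (n + 1) x)).congr_deriv ?_
  rw [Nat.add_sub_cancel, Nat.cast_succ]
  linear_combination ψ n x * two_mul_mul_hermiteFunction n x

theorem hermiteEnergy_le_zero : hermiteEnergy n x ≤ hermiteEnergy n 0 :=
  apply_le_apply_zero_of_hasDerivAt (hasDerivAt_hermiteEnergy n) (fun _ ↦ by positivity) x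

theorem hermiteEnergy_zero_le : hermiteEnergy n 0 ≤ 4 * √(n + 1) := by
  have pred : n * ψ (n - 1) 0 ^ 2 ≤ √(n + 1) := by
    rcases n with _ | n
    · simp
    · refine (?_ : _ ≤ √((n + 1 : ℕ) : ℝ)).trans (Real.sqrt_le_sqrt (by linarith))
      simpa using succ_mul_sq_hermiteFunction_zero_le n
  rw [hermiteEnergy_eq]
  linarith [succ_mul_sq_hermiteFunction_zero_le n, sq_nonneg (ψ n 0)]

theorem hermiteEnergy_le (hn : 1 ≤ n) : hermiteEnergy n x ≤ 8 * √n := by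
  have hn' : (1 : ℝ) ≤ n := Nat.one_le_cast.2 hn
  have hsqrt : √(n + 1 : ℝ) ≤ 2 * √n := by
    rw [Real.sqrt_le_left (by positivity), mul_pow, Real.sq_sqrt (by positivity)]
    linarith
  linarith [hermiteEnergy_le_zero n x, hermiteEnergy_zero_le n]

end Energy

section Bulk

/-- The bulk of the spectrum of the `n × n` Gaussian unitary ensemble, at distance `ε √n` from the
edges `±√(2n)`. It is empty for `√2 < ε` and `1 ≤ n`. -/
def gueBulk (ε : ℝ) (n : ℕ) : Set ℝ :=
  Set.Icc (-((√2 - ε) * √n)) ((√2 - ε) * √n)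

variable {ε : ℝ}

theorem sq_le_two_mul_of_mem_gueBulk (hε : 0 ≤ ε) {n : ℕ} {x : ℝ} (hx : x ∈ gueBulk ε n) :
    x ^ 2 ≤ 2 * n := by
  have habs : |x| ≤ √(2 * n) := calc
    |x| ≤ (√2 - ε) * √n := abs_le.2 hx
    _ ≤ √2 * √n := by gcongr; linarith
    _ = √(2 * n) := (Real.sqrt_mul zero_le_two _).symm
  exact (Real.sq_le (by positivity)).2 (abs_le.1 habs)

theorem mul_sq_add_sq_le_hermiteEnergy {n : ℕ} {x : ℝ} (hx : x ∈ gueBulk ε n) :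
    √2 * ε * n * (ψ n x ^ 2 + ψ (n - 1) x ^ 2) ≤ hermiteEnergy n x := by
  have hcoef : √(2 * n) * |x| ≤ (2 - √2 * ε) * n := calc
    √(2 * n) * |x| ≤ √(2 * n) * ((√2 - ε) * √n) := by gcongr; exact abs_le.2 hx
    _ = (√2 * √2 - √2 * ε) * (√n * √n) := by rw [Real.sqrt_mul zero_le_two]; ring
    _ = (2 - √2 * ε) * n := by
      rw [Real.mul_self_sqrt zero_le_two, Real.mul_self_sqrt (Nat.cast_nonneg n)]
  have hprod : 2 * |ψ n x * ψ (n - 1) x| ≤ ψ n x ^ 2 + ψ (n - 1) x ^ 2 := by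
    simpa [abs_mul, mul_assoc] using two_mul_le_add_sq |ψ n x| |ψ (n - 1) x|
  have cross : 2 * √(2 * n) * x * ψ n x * ψ (n - 1) x ≤
      (2 - √2 * ε) * n * (ψ n x ^ 2 + ψ (n - 1) x ^ 2) := calc
    _ ≤ |2 * √(2 * n) * x * ψ n x * ψ (n - 1) x| := le_abs_self _
    _ = √(2 * n) * |x| * (2 * |ψ n x * ψ (n - 1) x|) := by
      simp only [abs_mul, abs_two, abs_of_nonneg (Real.sqrt_nonneg _)]
      ring
    _ ≤ _ := mul_le_mul hcoef hprod (by positivity) (le_trans (by positivity) hcoef)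
  rw [hermiteEnergy_eq]
  linarith [sq_nonneg (ψ n x)]

theorem sqrt_mul_sq_add_sq_hermiteFunction_le (hε : 0 < ε) {n : ℕ} (hn : 1 ≤ n) {x : ℝ}
    (hx : x ∈ gueBulk ε n) : √n * (ψ n x ^ 2 + ψ (n - 1) x ^ 2) ≤ 8 / (√2 * ε) := by
  have hs : 0 < √(n : ℝ) := Real.sqrt_pos.2 (by exact_mod_cast hn)
  rw [le_div_iff₀ (by positivity)]
  refine le_of_mul_le_mul_left ?_ hs
  calc √n * (√n * (ψ n x ^ 2 + ψ (n - 1) x ^ 2) * (√2 * ε))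
      = √2 * ε * n * (ψ n x ^ 2 + ψ (n - 1) x ^ 2) := by
        linear_combination (ψ n x ^ 2 + ψ (n - 1) x ^ 2) * (√2 * ε) *
          Real.mul_self_sqrt (Nat.cast_nonneg (α := ℝ) n)
    _ ≤ hermiteEnergy n x := mul_sq_add_sq_le_hermiteEnergy hx
    _ ≤ 8 * √n := hermiteEnergy_le n x hn
    _ = √n * 8 := mul_comm _ _

theorem sq_add_sq_iteratedDeriv_succ_hermiteFunction_le (k : ℕ) {n : ℕ} (hn : 1 ≤ n) (x : ℝ) :
    iteratedDeriv (k + 1) (ψ n) x ^ 2 + iteratedDeriv (k + 1) (ψ (n - 1)) x ^ 2 ≤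
      3 * ((2 * n + x ^ 2) * (iteratedDeriv k (ψ n) x ^ 2 + iteratedDeriv k (ψ (n - 1)) x ^ 2) +
        k ^ 2 * (iteratedDeriv (k - 1) (ψ n) x ^ 2 + iteratedDeriv (k - 1) (ψ (n - 1)) x ^ 2)) := by
  obtain ⟨n, rfl⟩ := Nat.exists_eq_add_of_le' hn
  have hsq : √(2 * (n + 1) : ℝ) ^ 2 = 2 * (n + 1) := Real.sq_sqrt (by positivity)
  have lower := iteratedDeriv_succ_hermiteFunction_lower k (n + 1) x
  simp only [Nat.add_sub_cancel, Nat.cast_succ] at lower ⊢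
  rw [lower, iteratedDeriv_succ_hermiteFunction_raise k n x]
  have hlower := add_add_sq_le (√(2 * (n + 1)) * iteratedDeriv k (ψ n) x)
    (-(x * iteratedDeriv k (ψ (n + 1)) x)) (-(k * iteratedDeriv (k - 1) (ψ (n + 1)) x))
  have hraise := add_add_sq_le (x * iteratedDeriv k (ψ n) x) (k * iteratedDeriv (k - 1) (ψ n) x)
    (-(√(2 * (n + 1)) * iteratedDeriv k (ψ (n + 1)) x))
  refine (le_of_eq ?_).trans ((add_le_add hlower hraise).trans_eq ?_)
  · ring
  · linear_combination 3 * (iteratedDeriv k (ψ (n + 1)) x ^ 2 + iteratedDeriv k (ψ n) x ^ 2) * hsq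

theorem exists_sqrt_mul_sq_add_sq_iteratedDeriv_hermiteFunction_le (hε : 0 < ε) (k : ℕ) :
    ∃ C, 0 ≤ C ∧ ∀ n : ℕ, 1 ≤ n → ∀ x ∈ gueBulk ε n,
      √n * (iteratedDeriv k (ψ n) x ^ 2 + iteratedDeriv k (ψ (n - 1)) x ^ 2) ≤ C * n ^ k := by
  induction k using Nat.strong_induction_on with | _ k ih
  rcases k with _ | k
  · refine ⟨8 / (√2 * ε), by positivity, fun n hn x hx ↦ ?_⟩
    simpa using sqrt_mul_sq_add_sq_hermiteFunction_le hε hn hx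
  obtain ⟨C, hC₀, hC⟩ := ih k (by lia)
  obtain ⟨D, hD₀, hD⟩ := ih (k - 1) (by lia)
  refine ⟨12 * C + 3 * k ^ 2 * D, by positivity, fun n hn x hx ↦ ?_⟩
  have hn' : (1 : ℝ) ≤ n := Nat.one_le_cast.2 hn
  have hx2 := sq_le_two_mul_of_mem_gueBulk hε.le hx
  have hpow : (n : ℝ) ^ (k - 1) ≤ n ^ (k + 1) := pow_le_pow_right₀ hn' (by lia)
  specialize hC n hn x hx
  replace hD := (hD n hn x hx).trans (mul_le_mul_of_nonneg_left hpow hD₀)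
  set N := iteratedDeriv k (ψ n) x ^ 2 + iteratedDeriv k (ψ (n - 1)) x ^ 2
  set N' := iteratedDeriv (k - 1) (ψ n) x ^ 2 + iteratedDeriv (k - 1) (ψ (n - 1)) x ^ 2
  calc √n * (iteratedDeriv (k + 1) (ψ n) x ^ 2 + iteratedDeriv (k + 1) (ψ (n - 1)) x ^ 2)
      ≤ √n * (3 * ((2 * n + x ^ 2) * N + k ^ 2 * N')) := by
        gcongr
        exact sq_add_sq_iteratedDeriv_succ_hermiteFunction_le k hn x
    _ = 3 * ((2 * n + x ^ 2) * (√n * N) + k ^ 2 * (√n * N')) := by ring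
    _ ≤ 3 * ((2 * n + 2 * n) * (C * n ^ k) + k ^ 2 * (D * n ^ (k + 1))) := by
        gcongr
    _ = (12 * C + 3 * k ^ 2 * D) * n ^ (k + 1) := by ring

end Bulk

section Kernel

theorem sq_iteratedDeriv_succ_hermiteFunction_le (k j : ℕ) (x : ℝ) :
    iteratedDeriv (k + 1) (ψ j) x ^ 2 ≤
      j * iteratedDeriv k (ψ (j - 1)) x ^ 2 + (j + 1) * iteratedDeriv k (ψ (j + 1)) x ^ 2 := by
  have hsq₁ : √(2 * j : ℝ) ^ 2 = 2 * j := Real.sq_sqrt (by positivity)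
  have hsq₂ : √(2 * (j + 1) : ℝ) ^ 2 = 2 * (j + 1) := Real.sq_sqrt (by positivity)
  have hadd := add_sq_le (a := √(2 * j) * iteratedDeriv k (ψ (j - 1)) x)
    (b := -(√(2 * (j + 1)) * iteratedDeriv k (ψ (j + 1)) x))
  rw [← sub_eq_add_neg, ← two_mul_iteratedDeriv_succ_hermiteFunction, neg_sq] at hadd
  simp only [mul_pow, hsq₁, hsq₂] at hadd
  linarith

theorem sum_range_sq_iteratedDeriv_succ_hermiteFunction_le (k n : ℕ) (x : ℝ) :
    ∑ j ∈ Finset.range n, iteratedDeriv (k + 1) (ψ j) x ^ 2 ≤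
      n * (2 * ∑ j ∈ Finset.range n, iteratedDeriv k (ψ j) x ^ 2 +
        iteratedDeriv k (ψ n) x ^ 2) := calc
  _ ≤ ∑ j ∈ Finset.range n, (j * iteratedDeriv k (ψ (j - 1)) x ^ 2 +
      (j + 1) * iteratedDeriv k (ψ (j + 1)) x ^ 2) :=
    Finset.sum_le_sum fun j _ ↦ sq_iteratedDeriv_succ_hermiteFunction_le k j x
  _ = ∑ j ∈ Finset.range n, (2 * j + 1) * iteratedDeriv k (ψ j) x ^ 2 +
      n * (iteratedDeriv k (ψ n) x ^ 2 - iteratedDeriv k (ψ (n - 1)) x ^ 2) :=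
    sum_range_mul_pred_add_mul_succ (fun j ↦ iteratedDeriv k (ψ j) x ^ 2) n
  _ ≤ ∑ j ∈ Finset.range n, 2 * n * iteratedDeriv k (ψ j) x ^ 2 +
      n * iteratedDeriv k (ψ n) x ^ 2 := by
    gcongr with j hj
    · exact_mod_cast (by have := Finset.mem_range.1 hj; lia : 2 * j + 1 ≤ 2 * n)
    · exact sub_le_self _ (sq_nonneg _)
  _ = _ := by
    rw [← Finset.mul_sum]
    ring

variable {ε : ℝ}

theorem exists_sum_range_sq_iteratedDeriv_hermiteFunction_le (hε : 0 < ε) (k : ℕ) :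
    ∃ C, 0 ≤ C ∧ ∀ n : ℕ, 1 ≤ n → ∀ x ∈ gueBulk ε n,
      ∑ j ∈ Finset.range n, iteratedDeriv k (ψ j) x ^ 2 ≤ C * n ^ k * √n := by
  induction k with
  | zero =>
    refine ⟨8, by norm_num, fun n hn x _ ↦ ?_⟩
    have hsub : ∑ j ∈ Finset.range n, ψ j x ^ 2 ≤ hermiteEnergy n x :=
      le_add_of_nonneg_right (Finset.sum_nonneg fun j _ ↦ sq_nonneg (ψ j x))
    simpa using hsub.trans (hermiteEnergy_le n x hn)
  | succ k ih =>
    obtain ⟨C, hC₀, hC⟩ := ih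
    obtain ⟨D, hD₀, hD⟩ := exists_sqrt_mul_sq_add_sq_iteratedDeriv_hermiteFunction_le hε k
    refine ⟨2 * C + D, by positivity, fun n hn x hx ↦ ?_⟩
    have hs : 1 ≤ √(n : ℝ) := Real.one_le_sqrt.2 (Nat.one_le_cast.2 hn)
    have htop : iteratedDeriv k (ψ n) x ^ 2 ≤ D * n ^ k * √n := calc
      _ ≤ √n * (iteratedDeriv k (ψ n) x ^ 2 + iteratedDeriv k (ψ (n - 1)) x ^ 2) :=
        (le_add_of_nonneg_right (sq_nonneg _)).trans
          (le_mul_of_one_le_left (by positivity) hs)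
      _ ≤ D * n ^ k := hD n hn x hx
      _ ≤ D * n ^ k * √n := le_mul_of_one_le_right (by positivity) hs
    calc ∑ j ∈ Finset.range n, iteratedDeriv (k + 1) (ψ j) x ^ 2
        ≤ n * (2 * ∑ j ∈ Finset.range n, iteratedDeriv k (ψ j) x ^ 2 +
            iteratedDeriv k (ψ n) x ^ 2) :=
          sum_range_sq_iteratedDeriv_succ_hermiteFunction_le k n x
      _ ≤ n * (2 * (C * n ^ k * √n) + D * n ^ k * √n) := by gcongr; exact hC n hn x hx
      _ = (2 * C + D) * n ^ (k + 1) * √n := by ring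

/-- The mixed partial derivative `∂ₓ^k₁ ∂ᵧ^k₂ Kₙ(x, y)` of the GUE projection kernel, differentiated
term by term. -/
noncomputable def gueKernelDeriv (k₁ k₂ n : ℕ) (x y : ℝ) : ℝ :=
  ∑ j ∈ Finset.range n, iteratedDeriv k₁ (ψ j) x * iteratedDeriv k₂ (ψ j) y

theorem iteratedDeriv_iteratedDeriv_eq_gueKernelDeriv (k₁ k₂ n : ℕ) (x y : ℝ) :
    iteratedDeriv k₁ (fun u ↦ iteratedDeriv k₂ (fun v ↦ ∑ j ∈ Finset.range n, ψ j u * ψ j v) y) x =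
      gueKernelDeriv k₁ k₂ n x y := by
  have hψ (k j : ℕ) (x : ℝ) : ContDiffAt ℝ k (ψ j) x := (contDiff_hermiteFunction j).contDiffAt
  have inner (u : ℝ) : iteratedDeriv k₂ (fun v ↦ ∑ j ∈ Finset.range n, ψ j u * ψ j v) y =
      ∑ j ∈ Finset.range n, ψ j u * iteratedDeriv k₂ (ψ j) y := by
    rw [iteratedDeriv_fun_sum fun j _ ↦ contDiffAt_const.mul (hψ k₂ j y)]
    simp only [iteratedDeriv_const_mul_field]
  rw [funext inner, iteratedDeriv_fun_sum fun j _ ↦ (hψ k₁ j x).mul contDiffAt_const]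
  simp only [iteratedDeriv_mul_const_field, gueKernelDeriv]

theorem gueKernelDeriv_comm (k₁ k₂ n : ℕ) (x y : ℝ) :
    gueKernelDeriv k₁ k₂ n x y = gueKernelDeriv k₂ k₁ n y x :=
  Finset.sum_congr rfl fun _ _ ↦ mul_comm _ _

/-- The mixed partial derivative `∂ₓ^k₁ ∂ᵧ^k₂` of the Christoffel–Darboux numerator
`√(n / 2) (ψₙ(x) ψₙ₋₁(y) - ψₙ₋₁(x) ψₙ(y)) = (x - y) Kₙ(x, y)`. -/
noncomputable def christoffelDarbouxDeriv (k₁ k₂ n : ℕ) (x y : ℝ) : ℝ :=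
  √(2 * n) / 2 * (iteratedDeriv k₁ (ψ n) x * iteratedDeriv k₂ (ψ (n - 1)) y -
    iteratedDeriv k₁ (ψ (n - 1)) x * iteratedDeriv k₂ (ψ n) y)

theorem sub_mul_gueKernelDeriv (k₁ k₂ n : ℕ) (x y : ℝ) :
    (x - y) * gueKernelDeriv k₁ k₂ n x y = christoffelDarbouxDeriv k₁ k₂ n x y +
      -(k₁ * gueKernelDeriv (k₁ - 1) k₂ n x y) + k₂ * gueKernelDeriv k₁ (k₂ - 1) n x y := by
  unfold gueKernelDeriv christoffelDarbouxDeriv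
  induction n with
  | zero => simp
  | succ n ih =>
    simp only [Finset.sum_range_succ, Nat.add_sub_cancel, Nat.cast_succ]
    linear_combination ih +
      iteratedDeriv k₂ (ψ n) y / 2 * iteratedDeriv_hermiteFunction_three_term k₁ n x -
      iteratedDeriv k₁ (ψ n) x / 2 * iteratedDeriv_hermiteFunction_three_term k₂ n y

theorem exists_sq_gueKernelDeriv_le (hε : 0 < ε) (k₁ k₂ : ℕ) :
    ∃ C, 0 ≤ C ∧ ∀ n : ℕ, 1 ≤ n → ∀ x ∈ gueBulk ε n, ∀ y ∈ gueBulk ε n,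
      gueKernelDeriv k₁ k₂ n x y ^ 2 ≤ C * n ^ (k₁ + k₂ + 1) := by
  obtain ⟨C, hC₀, hC⟩ := exists_sum_range_sq_iteratedDeriv_hermiteFunction_le hε k₁
  obtain ⟨D, hD₀, hD⟩ := exists_sum_range_sq_iteratedDeriv_hermiteFunction_le hε k₂
  refine ⟨C * D, by positivity, fun n hn x hx y hy ↦ ?_⟩
  calc gueKernelDeriv k₁ k₂ n x y ^ 2
      ≤ (∑ j ∈ Finset.range n, iteratedDeriv k₁ (ψ j) x ^ 2) *
          ∑ j ∈ Finset.range n, iteratedDeriv k₂ (ψ j) y ^ 2 :=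
        Finset.sum_mul_sq_le_sq_mul_sq _ _ _
    _ ≤ (C * n ^ k₁ * √n) * (D * n ^ k₂ * √n) := by gcongr; exacts [hC n hn x hx, hD n hn y hy]
    _ = C * D * n ^ (k₁ + k₂ + 1) := by
      linear_combination C * D * n ^ (k₁ + k₂) * Real.mul_self_sqrt (Nat.cast_nonneg (α := ℝ) n)

theorem exists_sq_mul_gueKernelDeriv_pred_le (hε : 0 < ε) (k₁ k₂ : ℕ) :
    ∃ C, ∀ n : ℕ, 1 ≤ n → ∀ x ∈ gueBulk ε n, ∀ y ∈ gueBulk ε n,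
      (k₁ * gueKernelDeriv (k₁ - 1) k₂ n x y) ^ 2 ≤ C * n ^ (k₁ + k₂) := by
  rcases k₁ with _ | k₁
  · exact ⟨0, by simp⟩
  obtain ⟨C, -, hC⟩ := exists_sq_gueKernelDeriv_le hε k₁ k₂
  refine ⟨(k₁ + 1) ^ 2 * C, fun n hn x hx y hy ↦ ?_⟩
  rw [Nat.add_sub_cancel, Nat.cast_succ, mul_pow, mul_assoc, add_right_comm]
  gcongr
  exact hC n hn x hx y hy

theorem exists_sq_christoffelDarbouxDeriv_le (hε : 0 < ε) (k₁ k₂ : ℕ) :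
    ∃ C, ∀ n : ℕ, 1 ≤ n → ∀ x ∈ gueBulk ε n, ∀ y ∈ gueBulk ε n,
      christoffelDarbouxDeriv k₁ k₂ n x y ^ 2 ≤ C * n ^ (k₁ + k₂) := by
  obtain ⟨C, hC₀, hC⟩ := exists_sqrt_mul_sq_add_sq_iteratedDeriv_hermiteFunction_le hε k₁
  obtain ⟨D, -, hD⟩ := exists_sqrt_mul_sq_add_sq_iteratedDeriv_hermiteFunction_le hε k₂
  refine ⟨C * D / 2, fun n hn x hx y hy ↦ ?_⟩
  specialize hC n hn x hx
  specialize hD n hn y hy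
  rw [christoffelDarbouxDeriv]
  set a := iteratedDeriv k₁ (ψ n) x
  set b := iteratedDeriv k₁ (ψ (n - 1)) x
  set c := iteratedDeriv k₂ (ψ n) y
  set d := iteratedDeriv k₂ (ψ (n - 1)) y
  calc (√(2 * n) / 2 * (a * d - b * c)) ^ 2
      ≤ (√(2 * n) / 2) ^ 2 * ((a ^ 2 + b ^ 2) * (c ^ 2 + d ^ 2)) := by
        rw [mul_pow]
        gcongr
        exact sq_mul_sub_mul_le a b c d
    _ = (√n * (a ^ 2 + b ^ 2)) * (√n * (c ^ 2 + d ^ 2)) / 2 := by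
        rw [Real.sqrt_mul zero_le_two]
        linear_combination √n ^ 2 * ((a ^ 2 + b ^ 2) * (c ^ 2 + d ^ 2)) / 4 *
          Real.sq_sqrt (zero_le_two (α := ℝ))
    _ ≤ (C * n ^ k₁) * (D * n ^ k₂) / 2 := by gcongr
    _ = C * D / 2 * n ^ (k₁ + k₂) := by ring

theorem exists_sq_sub_mul_gueKernelDeriv_le (hε : 0 < ε) (k₁ k₂ : ℕ) :
    ∃ C, ∀ n : ℕ, 1 ≤ n → ∀ x ∈ gueBulk ε n, ∀ y ∈ gueBulk ε n,
      ((x - y) * gueKernelDeriv k₁ k₂ n x y) ^ 2 ≤ C * n ^ (k₁ + k₂) := by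
  obtain ⟨A, hA⟩ := exists_sq_christoffelDarbouxDeriv_le hε k₁ k₂
  obtain ⟨B, hB⟩ := exists_sq_mul_gueKernelDeriv_pred_le hε k₁ k₂
  obtain ⟨C, hC⟩ := exists_sq_mul_gueKernelDeriv_pred_le hε k₂ k₁
  refine ⟨3 * (A + B + C), fun n hn x hx y hy ↦ ?_⟩
  rw [sub_mul_gueKernelDeriv, gueKernelDeriv_comm k₁]
  refine (add_add_sq_le _ _ _).trans ?_
  have hC' := add_comm k₂ k₁ ▸ hC n hn y hy x hx
  linarith [hA n hn x hx y hy, neg_sq (k₁ * gueKernelDeriv (k₁ - 1) k₂ n x y), hB n hn x hx y hy]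

theorem exists_abs_gueKernelDeriv_le (hε : 0 < ε) (k₁ k₂ : ℕ) :
    ∃ C, ∀ n : ℕ, 1 ≤ n → ∀ x ∈ gueBulk ε n, ∀ y ∈ gueBulk ε n,
      |gueKernelDeriv k₁ k₂ n x y| ≤ C * (n : ℝ) ^ ((1 + (k₁ + k₂ : ℕ) : ℝ) / 2) ∧
        |x - y| * |gueKernelDeriv k₁ k₂ n x y| ≤ C * (n : ℝ) ^ ((k₁ + k₂ : ℕ) / 2 : ℝ) := by
  obtain ⟨A, -, hA⟩ := exists_sq_gueKernelDeriv_le hε k₁ k₂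
  obtain ⟨B, hB⟩ := exists_sq_sub_mul_gueKernelDeriv_le hε k₁ k₂
  refine ⟨max √A √B, fun n hn x hx y hy ↦ ⟨?_, ?_⟩⟩
  · have := abs_le_sqrt_mul_rpow_of_sq_le n.cast_nonneg (hA n hn x hx y hy)
    rw [Nat.cast_succ, add_comm _ (1 : ℝ)] at this
    exact this.trans (by gcongr; exact le_max_left _ _)
  · rw [← abs_mul]
    exact (abs_le_sqrt_mul_rpow_of_sq_le n.cast_nonneg (hB n hn x hx y hy)).trans
      (by gcongr; exact le_max_right _ _)

end Kernel

end HermiteKernel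

/-- **Derivative bounds for the GUE projection kernel.**  Let `η j` be the
`L²`-normalized Hermite functions (built from the physicists' Hermite polynomials
`H j x = 2^{j/2} He_j (x√2)`) and `K n x y = Σ_{j<n} η j x · η j y` the GUE projection
kernel.  For every `ε > 0` and every `k` there is `C` such that for all `n ≥ 1` and all
`(x, y)` in the square `[-(√2-ε)√n, (√2-ε)√n]²`, every mixed partial derivative of
`K n` of total order `k` is bounded by `C n^{(1+k)/2}`, and by `C n^{k/2} / |x - y|`
when moreover `|x - y| ≥ n^{-1/2}`. -/
theorem GUE_kernel_derivative_bounds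
    (H : ℕ → ℝ → ℝ)
    (hH : ∀ m x, H m x = (2 : ℝ) ^ ((m : ℝ) / 2) *
      Polynomial.aeval (x * Real.sqrt 2) (Polynomial.hermite m))
    (η : ℕ → ℝ → ℝ)
    (hη : ∀ j x, η j x = H j x * Real.exp (-x ^ 2 / 2) /
      Real.sqrt (2 ^ j * (j.factorial : ℝ) * Real.sqrt π))
    (K : ℕ → ℝ → ℝ → ℝ)
    (hK : ∀ n x y, K n x y = ∑ j ∈ Finset.range n, η j x * η j y)
    (ε : ℝ) (hε : 0 < ε) (k : ℕ) :
    ∃ C : ℝ, ∀ n : ℕ, 1 ≤ n → ∀ x y : ℝ,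
      x ∈ Set.Icc (-((Real.sqrt 2 - ε) * Real.sqrt n)) ((Real.sqrt 2 - ε) * Real.sqrt n) →
      y ∈ Set.Icc (-((Real.sqrt 2 - ε) * Real.sqrt n)) ((Real.sqrt 2 - ε) * Real.sqrt n) →
      ∀ k₁ k₂ : ℕ, k₁ + k₂ = k →
      (|iteratedDeriv k₁ (fun u => iteratedDeriv k₂ (fun v => K n u v) y) x| ≤
          C * (n : ℝ) ^ ((1 + (k : ℝ)) / 2)) ∧
      ((n : ℝ) ^ (-(1 / 2 : ℝ)) ≤ |x - y| →
        |iteratedDeriv k₁ (fun u => iteratedDeriv k₂ (fun v => K n u v) y) x| ≤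
          C * (n : ℝ) ^ ((k : ℝ) / 2) / |x - y|) := by
  obtain rfl : η = hermiteFunction := funext₂ fun j x ↦ by
    rw [hη, hH, physicists_hermite_mul_exp_div_eq_hermiteFunction]
  choose C hC using exists_abs_gueKernelDeriv_le hε
  obtain ⟨M, hM⟩ := ((Finset.HasAntidiagonal.antidiagonal k).image fun p ↦ C p.1 p.2).exists_le
  refine ⟨M, fun n hn x y hx hy k₁ k₂ hk ↦ ?_⟩
  have hCM : C k₁ k₂ ≤ M :=
    hM _ (Finset.mem_image.2 ⟨(k₁, k₂), Finset.HasAntidiagonal.mem_antidiagonal.2 hk, rfl⟩)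
  obtain ⟨bound, boundOff⟩ := hC k₁ k₂ n hn x hx y hy
  simp only [hK, iteratedDeriv_iteratedDeriv_eq_gueKernelDeriv]
  rw [hk] at bound boundOff
  refine ⟨bound.trans (by gcongr), fun hxy ↦ ?_⟩
  have hn' : (0 : ℝ) < n := by exact_mod_cast hn
  rw [le_div_iff₀' ((Real.rpow_pos_of_pos hn' _).trans_le hxy)]
  exact boundOff.trans (by gcongr)
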